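/- arXiv:2604.01012 — 2 statements merged into one kernel-verified Lean document; each statement's English description precedes it below -/
import Mathlib

section
/- Let n ≥ 2 and d ≥ 1. The sum-exclude-self map restricted to d-bit inputs, i.e., the map F : (Fin n → Fin (2^d)) → (Fin n → ℤ) defined by (F In) i = ∑_{j ≠ i} (In j : ℤ), is injective; consequently its image has cardinality exactly 2^(n·d). -/
/-!
Each entry is missing from exactly one of the `n` sums, so the sums add up to `n - 1` times the
total. Cancelling `n - 1` recovers the total, and comparing the total with the `i`-th sum recovers
the `i`-th entry.
-/

section

variable {ι M : Type*} [Fintype ι] [DecidableEq ι]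

theorem sum_sum_compl_singleton [AddCommMonoid M] (a : ι → M) :
    ∑ i, ∑ j ∈ ({i}ᶜ : Finset ι), a j = (Fintype.card ι - 1) • ∑ j, a j := by
  calc ∑ i, ∑ j ∈ ({i}ᶜ : Finset ι), a j
      = ∑ j, ∑ _i ∈ ({j}ᶜ : Finset ι), a j :=
        Finset.sum_comm' fun i j => by simp [eq_comm]
    _ = ∑ j, (Fintype.card ι - 1) • a j := by
        simp only [Finset.sum_const, Finset.card_compl, Finset.card_singleton]
    _ = (Fintype.card ι - 1) • ∑ j, a j := Finset.sum_nsmul _ _ _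

theorem sum_compl_singleton_injective [AddCancelCommMonoid M]
    (hreg : IsSMulRegular M (Fintype.card ι - 1)) :
    Function.Injective (fun (a : ι → M) (i : ι) => ∑ j ∈ ({i}ᶜ : Finset ι), a j) := by
  intro a b hab
  have sums_eq (i : ι) : ∑ j ∈ ({i}ᶜ : Finset ι), a j = ∑ j ∈ ({i}ᶜ : Finset ι), b j :=
    congrFun hab i
  have total_eq : ∑ j, a j = ∑ j, b j := hreg <| by
    simp only [← sum_sum_compl_singleton, sums_eq]
  funext i
  rw [Fintype.sum_eq_add_sum_compl i a, Fintype.sum_eq_add_sum_compl i b, sums_eq i] at total_eq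
  exact add_right_cancel total_eq

theorem sum_exclude_self_dbit_injective_card_general {α : Type*} [Fintype α]
    [AddCancelCommMonoid M] (hreg : IsSMulRegular M (Fintype.card ι - 1))
    {v : α → M} (hv : Function.Injective v) :
    Function.Injective
      (fun (In : ι → α) (i : ι) => ∑ j ∈ ({i}ᶜ : Finset ι), v (In j)) ∧
    Nat.card
      (Set.range (fun (In : ι → α) (i : ι) => ∑ j ∈ ({i}ᶜ : Finset ι), v (In j))) =
        Fintype.card α ^ Fintype.card ι := by
  have inj : Function.Injective
      (fun (In : ι → α) (i : ι) => ∑ j ∈ ({i}ᶜ : Finset ι), v (In j)) :=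
    (sum_compl_singleton_injective hreg).comp hv.comp_left
  refine ⟨inj, ?_⟩
  rw [Nat.card_range_of_injective inj, Nat.card_eq_fintype_card, Fintype.card_fun]

end

theorem sum_exclude_self_dbit_injective_card (n d : ℕ) (hn : 2 ≤ n) (hd : 1 ≤ d) :
    Function.Injective
      (fun (In : Fin n → Fin (2 ^ d)) (i : Fin n) =>
        ∑ j ∈ ({i}ᶜ : Finset (Fin n)), ((In j : ℕ) : ℤ)) ∧
    Nat.card
      (Set.range (fun (In : Fin n → Fin (2 ^ d)) (i : Fin n) =>
        ∑ j ∈ ({i}ᶜ : Finset (Fin n)), ((In j : ℕ) : ℤ))) = 2 ^ (n * d) := by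
  have hreg : IsSMulRegular ℤ (Fintype.card (Fin n) - 1) :=
    nsmul_right_injective (by rw [Fintype.card_fin]; lia)
  simpa only [Function.comp_apply, Fintype.card_fin, ← pow_mul, mul_comm d n] using
    sum_exclude_self_dbit_injective_card_general hreg
      (Nat.cast_injective.comp (Fin.val_injective (n := 2 ^ d)))
end

section
/- Let n ≥ 2, d ≥ 1, let S ⊆ Fin n be a set of indices with |S| ≤ n − 2, and let i : Fin n be any index. Then there exist two input arrays In, In' : Fin n → Fin (2^d) that agree on all indices in S but satisfy ∑_{j ≠ i} (In j : ℤ) ≠ ∑_{j ≠ i} (In' j : ℤ). In particular, the correct value of Out[i] is not determined by the values of the input at the positions in S. -/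
section AgreeingInputs

variable {ι α M : Type*} [AddCancelCommMonoid M]

theorem sum_comp_update_eq_sum_iff [DecidableEq ι] (f : α → M) (x : ι → α) (c : α)
    {T : Finset ι} {k : ι} (hk : k ∈ T) :
    ∑ j ∈ T, f (Function.update x k c j) = ∑ j ∈ T, f (x j) ↔ f c = f (x k) := by
  have off_k : ∑ j ∈ T.erase k, f (Function.update x k c j) = ∑ j ∈ T.erase k, f (x j) :=
    Finset.sum_congr rfl fun j hj => by rw [Function.update_of_ne (Finset.ne_of_mem_erase hj)]
  rw [← Finset.add_sum_erase T _ hk, ← Finset.add_sum_erase T (fun j => f (x j)) hk, off_k,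
    Function.update_self, add_left_inj]

theorem first_pass_not_determined_general (f : α → M) {a b : α} (hab : f a ≠ f b)
    {S : Set ι} {T : Finset ι} (hTS : ¬ (T : Set ι) ⊆ S) :
    ∃ x y : ι → α, Set.EqOn x y S ∧ ∑ j ∈ T, f (x j) ≠ ∑ j ∈ T, f (y j) := by
  classical
  obtain ⟨k, hkT, hkS⟩ := Set.not_subset.mp hTS
  refine ⟨Function.update (fun _ => b) k a, fun _ => b, fun j hj => ?_, ?_⟩
  · exact Function.update_of_ne (ne_of_mem_of_not_mem hj hkS) _ _
  · exact (sum_comp_update_eq_sum_iff f _ a hkT).not.mpr hab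

end AgreeingInputs

theorem not_compl_singleton_subset_of_card_add_one_lt {ι : Type*} [Fintype ι] [DecidableEq ι]
    {S : Finset ι} (hS : S.card + 1 < Fintype.card ι) (i : ι) : ¬ {i}ᶜ ⊆ S := by
  intro hsub
  have hcard : ({i}ᶜ : Finset ι).card ≤ S.card := Finset.card_le_card hsub
  rw [Finset.card_compl, Finset.card_singleton] at hcard
  omega

theorem first_pass_not_determined (n d : ℕ) (hn : 2 ≤ n) (hd : 1 ≤ d)
    (S : Finset (Fin n)) (hS : S.card ≤ n - 2) (i : Fin n) :
    ∃ In In' : Fin n → Fin (2 ^ d),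
      (∀ j ∈ S, In j = In' j) ∧
      (∑ j ∈ ({i}ᶜ : Finset (Fin n)), ((In j : ℕ) : ℤ)) ≠
        (∑ j ∈ ({i}ᶜ : Finset (Fin n)), ((In' j : ℕ) : ℤ)) := by
  have hunread : ¬ {i}ᶜ ⊆ S :=
    not_compl_singleton_subset_of_card_add_one_lt (by rw [Fintype.card_fin]; omega) i
  exact first_pass_not_determined_general (fun v : Fin (2 ^ d) => ((v : ℕ) : ℤ))
    (a := ⟨1, Nat.one_lt_two_pow (by omega)⟩) (b := ⟨0, by positivity⟩) (by simp)
    (T := {i}ᶜ) (Finset.coe_subset.not.mpr hunread)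
end
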